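/- arXiv:1411.5663 — 2 statements merged into one kernel-verified Lean document; each statement's English description precedes it below -/
import Mathlib

section
/- The endomorphism j := e_1∘e_2∘e_3∘e_4∘e_5∘e_6 of ℝ^8 satisfies j∘j = −Id_{ℝ^8}, it anti-commutes with Clifford multiplication by vectors of ℝ^6, i.e. j∘e_i = −e_i∘j for every 1 ≤ i ≤ 6, and it is a linear isometry: ⟨j(v), j(w)⟩ = ⟨v, w⟩ for all v, w ∈ ℝ^8. -/
open RealInnerProductSpace

noncomputable section

/-- The spin representation space Δ = ℝ^8. -/
abbrev Δ : Type := EuclideanSpace ℝ (Fin 8)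

/-- The standard skew endomorphism E_{ij} of ℝ^8: u_i ↦ u_j, u_j ↦ -u_i, others ↦ 0. -/
def E (i j : Fin 8) : Δ →ₗ[ℝ] Δ where
  toFun v := v i • EuclideanSpace.single j (1 : ℝ) - v j • EuclideanSpace.single i (1 : ℝ)
  map_add' x y := by
    simp only [PiLp.add_apply, add_smul]
    module
  map_smul' c x := by
    simp only [PiLp.smul_apply, smul_eq_mul, RingHom.id_apply, mul_smul]
    module

/-- The seven Clifford endomorphisms e_1, …, e_7 (indexed 0,…,6). -/
def cliff : Fin 7 → (Δ →ₗ[ℝ] Δ) :=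
  ![  E 0 7 + E 1 6 - E 2 5 - E 3 4,
    - E 0 6 + E 1 7 + E 2 4 - E 3 5,
    - E 0 5 + E 1 4 - E 2 7 + E 3 6,
    - E 0 4 - E 1 5 - E 2 6 - E 3 7,
    - E 0 2 - E 1 3 + E 4 6 + E 5 7,
      E 0 3 - E 1 2 - E 4 7 + E 5 6,
      E 0 1 - E 2 3 - E 4 5 + E 6 7]

/-- j = e_1 ∘ e_2 ∘ e_3 ∘ e_4 ∘ e_5 ∘ e_6. -/
def jmap : Δ →ₗ[ℝ] Δ :=
  cliff 0 ∘ₗ cliff 1 ∘ₗ cliff 2 ∘ₗ cliff 3 ∘ₗ cliff 4 ∘ₗ cliff 5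

/-- Clifford multiplication of a vector x ∈ ℝ^6 on a spinor. -/
def cm6 (x : EuclideanSpace ℝ (Fin 6)) (φ : Δ) : Δ :=
  ∑ i : Fin 6, x i • cliff i.castSucc φ

/-- Clifford multiplication of a vector x ∈ ℝ^7 on a spinor. -/
def cm7 (x : EuclideanSpace ℝ (Fin 7)) (φ : Δ) : Δ :=
  ∑ i : Fin 7, x i • cliff i φ


lemma cliff_0_apply (v : Δ) :
    cliff 0 v = !₂[-v 7, -v 6, v 5, v 4, -v 3, -v 2, v 1, v 0] := by
  ext k
  fin_cases k <;> simp [cliff, E]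

lemma cliff_1_apply (v : Δ) :
    cliff 1 v = !₂[v 6, -v 7, -v 4, v 5, v 2, -v 3, -v 0, v 1] := by
  ext k
  fin_cases k <;> simp [cliff, E]

lemma cliff_2_apply (v : Δ) :
    cliff 2 v = !₂[v 5, -v 4, v 7, -v 6, v 1, -v 0, v 3, -v 2] := by
  ext k
  fin_cases k <;> simp [cliff, E]

lemma cliff_3_apply (v : Δ) :
    cliff 3 v = !₂[v 4, v 5, v 6, v 7, -v 0, -v 1, -v 2, -v 3] := by
  ext k
  fin_cases k <;> simp [cliff, E]

lemma cliff_4_apply (v : Δ) :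
    cliff 4 v = !₂[v 2, v 3, -v 0, -v 1, -v 6, -v 7, v 4, v 5] := by
  ext k
  fin_cases k <;> simp [cliff, E]

lemma cliff_5_apply (v : Δ) :
    cliff 5 v = !₂[-v 3, v 2, -v 1, v 0, v 7, -v 6, v 5, -v 4] := by
  ext k
  fin_cases k <;> simp [cliff, E]

lemma jmap_apply (v : Δ) :
    jmap v = !₂[v 1, -v 0, -v 3, v 2, -v 5, v 4, v 7, -v 6] := by
  ext k
  fin_cases k <;> simp [jmap, cliff_0_apply, cliff_1_apply, cliff_2_apply, cliff_3_apply,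
    cliff_4_apply, cliff_5_apply]

/-- j := e_1∘e_2∘e_3∘e_4∘e_5∘e_6 satisfies j∘j = -Id, anti-commutes with Clifford
multiplication by vectors of ℝ^6, and is a linear isometry of ℝ^8. -/
theorem jmap_square_anticommute_isometry :
    jmap ∘ₗ jmap = -LinearMap.id ∧
    (∀ i : Fin 6, jmap ∘ₗ cliff i.castSucc = -(cliff i.castSucc ∘ₗ jmap)) ∧
    (∀ v w : Δ, ⟪jmap v, jmap w⟫ = ⟪v, w⟫) := by
  refine ⟨?_, ?_, ?_⟩
  · ext v k
    fin_cases k <;> simp [jmap_apply]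
  · intro i
    ext v k
    fin_cases i <;> fin_cases k <;> simp [jmap_apply, cliff_0_apply, cliff_1_apply,
      cliff_2_apply, cliff_3_apply, cliff_4_apply, cliff_5_apply]
  · intro v w
    simp [jmap_apply, PiLp.inner_apply, Fin.sum_univ_eight]
    ring

end
end

section
/- For every unit spinor φ ∈ Δ there exists a unique linear map J_φ : ℝ^6 → ℝ^6 such that j(x·φ) = (J_φ x)·φ for all x ∈ ℝ^6; moreover J_φ∘J_φ = −Id_{ℝ^6} and J_φ is orthogonal: ⟨J_φ x, J_φ y⟩ = ⟨x, y⟩ for all x, y ∈ ℝ^6. -/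
open RealInnerProductSpace

noncomputable section

set_option maxHeartbeats 4000000 in
theorem cliff_coords (φ : Δ) :
    cliff 0 φ = !₂[-φ 7, -φ 6, φ 5, φ 4, -φ 3, -φ 2, φ 1, φ 0] ∧
    cliff 1 φ = !₂[φ 6, -φ 7, -φ 4, φ 5, φ 2, -φ 3, -φ 0, φ 1] ∧
    cliff 2 φ = !₂[φ 5, -φ 4, φ 7, -φ 6, φ 1, -φ 0, φ 3, -φ 2] ∧
    cliff 3 φ = !₂[φ 4, φ 5, φ 6, φ 7, -φ 0, -φ 1, -φ 2, -φ 3] ∧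
    cliff 4 φ = !₂[φ 2, φ 3, -φ 0, -φ 1, -φ 6, -φ 7, φ 4, φ 5] ∧
    cliff 5 φ = !₂[-φ 3, φ 2, -φ 1, φ 0, φ 7, -φ 6, φ 5, -φ 4] := by
  refine ⟨?_, ?_, ?_, ?_, ?_, ?_⟩ <;> ext i <;> fin_cases i <;> simp [cliff, E]

theorem jmap_coords (φ : Δ) :
    jmap φ = !₂[φ 1, -φ 0, -φ 3, φ 2, -φ 5, φ 4, φ 7, -φ 6] := by
  simp only [jmap, LinearMap.comp_apply, (cliff_coords _).1, (cliff_coords _).2.1,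
    (cliff_coords _).2.2.1, (cliff_coords _).2.2.2.1, (cliff_coords _).2.2.2.2.1,
    (cliff_coords _).2.2.2.2.2]
  ext i
  fin_cases i <;> simp

/-- Explicit coordinates of Clifford multiplication. -/
theorem cm6_expand (x : EuclideanSpace ℝ (Fin 6)) (φ : Δ) :
    cm6 x φ = x 0 • cliff 0 φ + x 1 • cliff 1 φ + x 2 • cliff 2 φ + x 3 • cliff 3 φ
      + x 4 • cliff 4 φ + x 5 • cliff 5 φ := by
  simp only [cm6, Fin.sum_univ_six]
  rfl

theorem cm6_coords (x : EuclideanSpace ℝ (Fin 6)) (φ : Δ) :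
    cm6 x φ = !₂[
      -x 0 * φ 7 + x 1 * φ 6 + x 2 * φ 5 + x 3 * φ 4 + x 4 * φ 2 - x 5 * φ 3,
      -x 0 * φ 6 - x 1 * φ 7 - x 2 * φ 4 + x 3 * φ 5 + x 4 * φ 3 + x 5 * φ 2,
      x 0 * φ 5 - x 1 * φ 4 + x 2 * φ 7 + x 3 * φ 6 - x 4 * φ 0 - x 5 * φ 1,
      x 0 * φ 4 + x 1 * φ 5 - x 2 * φ 6 + x 3 * φ 7 - x 4 * φ 1 + x 5 * φ 0,
      -x 0 * φ 3 + x 1 * φ 2 + x 2 * φ 1 - x 3 * φ 0 - x 4 * φ 6 + x 5 * φ 7,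
      -x 0 * φ 2 - x 1 * φ 3 - x 2 * φ 0 - x 3 * φ 1 - x 4 * φ 7 - x 5 * φ 6,
      x 0 * φ 1 - x 1 * φ 0 + x 2 * φ 3 - x 3 * φ 2 + x 4 * φ 4 + x 5 * φ 5,
      x 0 * φ 0 + x 1 * φ 1 - x 2 * φ 2 - x 3 * φ 3 + x 4 * φ 5 - x 5 * φ 4] := by
  rw [cm6_expand, (cliff_coords _).1, (cliff_coords _).2.1,
    (cliff_coords _).2.2.1, (cliff_coords _).2.2.2.1, (cliff_coords _).2.2.2.2.1,
    (cliff_coords _).2.2.2.2.2]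
  ext i
  fin_cases i <;> simp <;> ring

theorem cm6_inner (x y : EuclideanSpace ℝ (Fin 6)) (φ : Δ) :
    ⟪cm6 x φ, cm6 y φ⟫ = ⟪x, y⟫ * ⟪φ, φ⟫ := by
  simp only [cm6_coords, PiLp.inner_apply, Fin.sum_univ_six, Fin.sum_univ_eight]
  simp
  ring

theorem jmap_inner (φ ψ : Δ) : ⟪jmap φ, jmap ψ⟫ = ⟪φ, ψ⟫ := by
  simp only [jmap_coords, PiLp.inner_apply, Fin.sum_univ_eight]
  simp
  ring

theorem jmap_jmap (φ : Δ) : jmap (jmap φ) = -φ := by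
  rw [jmap_coords (jmap φ), jmap_coords φ]
  ext i
  fin_cases i <;> simp

/-- `cm6` as a linear map in the vector. -/
def cmL (φ : Δ) : EuclideanSpace ℝ (Fin 6) →ₗ[ℝ] Δ where
  toFun x := cm6 x φ
  map_add' x y := by simp [cm6, add_smul, Finset.sum_add_distrib]
  map_smul' c x := by simp [cm6, mul_smul, Finset.smul_sum]

/-- The candidate for `J_φ`. -/
def Jcand (φ : Δ) : EuclideanSpace ℝ (Fin 6) →ₗ[ℝ] EuclideanSpace ℝ (Fin 6) where
  toFun x := WithLp.toLp 2 (fun k : Fin 6 => ⟪jmap (cmL φ x), cliff k.castSucc φ⟫)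
  map_add' x y := by
    ext k
    simp [inner_add_left]
  map_smul' c x := by
    ext k
    simp [inner_smul_left]

set_option maxRecDepth 100000 in
set_option maxHeartbeats 1000000 in
theorem Jcand_spec (φ : Δ) (x : EuclideanSpace ℝ (Fin 6)) :
    ⟪φ, φ⟫ • jmap (cm6 x φ) = cm6 (Jcand φ x) φ := by
  have h : ∀ k : Fin 6, (Jcand φ x) k = ⟪jmap (cm6 x φ), cliff k.castSucc φ⟫ := by
    intro k
    simp only [Jcand, cmL, LinearMap.coe_mk, AddHom.coe_mk]
  have h0 : (Jcand φ x) 0 = ⟪jmap (cm6 x φ), cliff 0 φ⟫ := by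
    rw [h, show (Fin.castSucc (0 : Fin 6)) = (0 : Fin 7) from rfl]
  have h1 : (Jcand φ x) 1 = ⟪jmap (cm6 x φ), cliff 1 φ⟫ := by
    rw [h, show (Fin.castSucc (1 : Fin 6)) = (1 : Fin 7) from rfl]
  have h2 : (Jcand φ x) 2 = ⟪jmap (cm6 x φ), cliff 2 φ⟫ := by
    rw [h, show (Fin.castSucc (2 : Fin 6)) = (2 : Fin 7) from rfl]
  have h3 : (Jcand φ x) 3 = ⟪jmap (cm6 x φ), cliff 3 φ⟫ := by
    rw [h, show (Fin.castSucc (3 : Fin 6)) = (3 : Fin 7) from rfl]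
  have h4 : (Jcand φ x) 4 = ⟪jmap (cm6 x φ), cliff 4 φ⟫ := by
    rw [h, show (Fin.castSucc (4 : Fin 6)) = (4 : Fin 7) from rfl]
  have h5 : (Jcand φ x) 5 = ⟪jmap (cm6 x φ), cliff 5 φ⟫ := by
    rw [h, show (Fin.castSucc (5 : Fin 6)) = (5 : Fin 7) from rfl]
  clear h
  simp only [(cliff_coords _).1, (cliff_coords _).2.1,
    (cliff_coords _).2.2.1, (cliff_coords _).2.2.2.1, (cliff_coords _).2.2.2.2.1,
    (cliff_coords _).2.2.2.2.2, jmap_coords, cm6_coords x,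
    PiLp.inner_apply, Fin.sum_univ_eight] at h0 h1 h2 h3 h4 h5
  simp at h0 h1 h2 h3 h4 h5
  rw [cm6_coords (Jcand φ x), jmap_coords, cm6_coords x]
  simp only [PiLp.inner_apply, Fin.sum_univ_eight]
  generalize Jcand φ x = z at *
  ext i
  fin_cases i <;> simp <;> simp only [h0, h1, h2, h3, h4, h5] <;> ring

theorem cm6_injective (φ : Δ) (hφ : ⟪φ, φ⟫ = 1) (x y : EuclideanSpace ℝ (Fin 6))
    (h : cm6 x φ = cm6 y φ) : x = y := by
  have h1 : cm6 (x - y) φ = 0 := by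
    have := (cmL φ).map_sub x y
    change cm6 (x - y) φ = cm6 x φ - cm6 y φ at this
    rw [this, h, sub_self]
  have h2 := cm6_inner (x - y) (x - y) φ
  rw [h1, hφ, inner_zero_left, mul_one] at h2
  exact sub_eq_zero.mp (inner_self_eq_zero.mp h2.symm)

/-- For every unit spinor φ there exists a unique linear map J_φ : ℝ^6 → ℝ^6 with
j(x·φ) = (J_φ x)·φ for all x; moreover J_φ∘J_φ = -Id and J_φ is orthogonal. -/
theorem exists_unique_Jphi (φ : Δ) (hφ : ⟪φ, φ⟫ = 1) :
    (∃! J : EuclideanSpace ℝ (Fin 6) →ₗ[ℝ] EuclideanSpace ℝ (Fin 6),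
      ∀ x : EuclideanSpace ℝ (Fin 6), jmap (cm6 x φ) = cm6 (J x) φ) ∧
    (∀ J : EuclideanSpace ℝ (Fin 6) →ₗ[ℝ] EuclideanSpace ℝ (Fin 6),
      (∀ x : EuclideanSpace ℝ (Fin 6), jmap (cm6 x φ) = cm6 (J x) φ) →
        J ∘ₗ J = -LinearMap.id ∧
        ∀ x y : EuclideanSpace ℝ (Fin 6), ⟪J x, J y⟫ = ⟪x, y⟫) := by
  refine ⟨⟨Jcand φ, ?_, ?_⟩, ?_⟩
  · intro x
    have := Jcand_spec φ x
    rwa [hφ, one_smul] at this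
  · intro J hJ
    apply LinearMap.ext
    intro x
    apply cm6_injective φ hφ
    have := Jcand_spec φ x
    rw [hφ, one_smul] at this
    rw [← hJ, this]
  · intro J hJ
    constructor
    · apply LinearMap.ext
      intro x
      apply cm6_injective φ hφ
      have h := (cmL φ).map_neg x
      change cm6 (-x) φ = -cm6 x φ at h
      change cm6 (J (J x)) φ = cm6 (-x) φ
      rw [h, ← hJ, ← hJ, jmap_jmap]
    · intro x y
      have h1 := cm6_inner (J x) (J y) φ
      rw [← hJ, ← hJ, jmap_inner, cm6_inner, hφ, mul_one, mul_one] at h1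
      exact h1.symm


end
end
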